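/- arXiv:2605.21169 — 2 statements merged into one kernel-verified Lean document; each statement's English description precedes it below -/
import Mathlib

section
/- ε-solution guarantee for strongly convex Decentralized Cubic Newton (Theorem 2): assume each f_i is μ_i-strongly convex with μ_i > 0, set μ̄ = (1/m)Σ_i μ_i, let x* be the global minimizer of f, and let ε > 0. Take γ = 1/D, L ≥ L̄₂, α = min{ 1/2, √(3μ̄/(16(L + L̄₂)D)) }, and suppose for every k = 0,…,N the per-iteration consensus errors satisfy Δ̂_x^k ≤ min{ αε/(24L̄₁D), (αε/(4(L + L̄₂)))^{1/3}, 2D·√( αεL̄₁/(3μ̄D²L̄₁ + 4αε(2L̄₁ + DL̄₂)) ), μ̄/(64(L̄₁/D + L̄₂)) }, Δ̂_g^k ≤ min{ αε/(12D), μ̄D/32 }, Δ̂_H^k ≤ μ̄/16; take δ₁ = Δ̂_g + 2L̄₁Δ̂_x and δ₂ = Δ̂_H + 2L̄₂Δ̂_x where Δ̂_g, Δ̂_H, Δ̂_x are the stated uniform bounds. Suppose ‖x̄^k − x*‖ ≤ D for all k = 0,…,N. Then after N + 1 iterations with N = ⌈(1/α)·log( 2(f(x̄^0) − f(x*))/ε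 )⌉ − 1 it holds that f(x̄^{N+1}) − f(x*) ≤ ε. -/
/-!
One iteration contracts the optimality gap up to a small additive error:
`F x̄ᵏ⁺¹ - F x* ≤ (1 - α) (F x̄ᵏ - F x*) + α ε / 2`, and iterating this `N + 1` times gives the claim,
since `(1 - α) ^ (N + 1) ≤ exp (-α (N + 1)) ≤ ε / (2 (F x̄⁰ - F x*))`.

For the one-step estimate, the second-order Taylor bound (`abs_taylor_two_le`) and the Lipschitz
conditions show that the inexact quadratic model at `x̂ᵢ` differs from `F` by at most
`δ₁ ‖s‖ + δ₂ / 2 ‖s‖² + L̄₂ / 6 ‖s‖³` (`abs_inexact_model_le`). By Young's inequality for `δ₁ ‖s‖`,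
`F x̂ᵢ + ω̂ᵢ` is an upper bound of `F` which overestimates `F` by at most
`δ₁ D + (δ₁ / D + δ₂) ‖s‖² + (L + L̄₂) / 6 ‖s‖³`. Comparing the minimizer of `ω̂ᵢ` with the point
`x̄ᵏ + α (x* - x̄ᵏ)`, the strong convexity of `F` supplies the negative term
`- α (1 - α) μ̄ / 2 ‖x̄ᵏ - x*‖²` which absorbs the part of the error depending on `‖x̄ᵏ - x*‖`
(`error_budget`). Convexity of `F` finally passes from the points `xᵢᵏ⁺¹` to their average.

Degenerate parameters need no separate theory: in the zero space the claim is trivial, `L + L̄₂ = 0`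
would force `α = 0` and hence `N = -1`, and `L̄₁ = 0` forces `Δ̂ₓ = 0`.
-/

open scoped RealInnerProductSpace
open Finset

/-- The Hessian of `f : E → ℝ` at `x`, as a continuous linear map `E →L[ℝ] E`
(the derivative of the gradient). Its norm is the operator norm. -/
noncomputable def hess {E : Type*} [NormedAddCommGroup E] [InnerProductSpace ℝ E]
    [FiniteDimensional ℝ E] (f : E → ℝ) (x : E) : E →L[ℝ] E :=
  fderiv ℝ (gradient f) x

/-! ### Taylor bounds under a Lipschitz Hessian -/

section Taylor

variable {E : Type*} [NormedAddCommGroup E] [InnerProductSpace ℝ E] [FiniteDimensional ℝ E]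

lemma differentiable_gradient_of_contDiff_two {f : E → ℝ} (hf : ContDiff ℝ 2 f) :
    Differentiable ℝ (gradient f) := by
  have h1 : Differentiable ℝ (fderiv ℝ f) :=
    (hf.fderiv_right (m := 1) (by norm_num)).differentiable (by norm_num)
  exact ((InnerProductSpace.toDual ℝ E).symm.toContinuousLinearEquiv.differentiable).comp h1

/-- First-order Taylor bound for the gradient along the segment `[x, x + s]`. -/
lemma norm_gradient_sub_le {f : E → ℝ} (hf : ContDiff ℝ 2 f) {K : ℝ}
    (hK : ∀ x y, ‖hess f x - hess f y‖ ≤ K * ‖x - y‖) (x s : E) {t : ℝ}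
    (ht : t ∈ Set.Icc (0 : ℝ) 1) :
    ‖gradient f (x + t • s) - gradient f x - t • hess f x s‖ ≤ K / 2 * ‖s‖ ^ 2 * t ^ 2 := by
  have hd := differentiable_gradient_of_contDiff_two hf
  have hline : ∀ u : ℝ, HasDerivAt (fun u : ℝ => x + u • s) s u := fun u => by
    simpa using ((hasDerivAt_id u).smul_const s).const_add x
  have hder : ∀ u : ℝ, HasDerivAt
      (fun u : ℝ => gradient f (x + u • s) - gradient f x - u • hess f x s)
      (hess f (x + u • s) s - hess f x s) u := fun u => by
    have h1 : HasDerivAt (fun u : ℝ => gradient f (x + u • s)) (hess f (x + u • s) s) u := by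
      have hfd : HasFDerivAt (gradient f) (hess f (x + u • s)) (x + u • s) :=
        (hd (x + u • s)).hasFDerivAt
      exact hfd.comp_hasDerivAt u (hline u)
    have h2 := (h1.sub_const (gradient f x)).sub ((hasDerivAt_id u).smul_const (hess f x s))
    exact h2.congr_deriv (by simp)
  refine image_norm_le_of_norm_deriv_right_le_deriv_boundary
    (a := 0) (b := 1) (f' := fun u => hess f (x + u • s) s - hess f x s)
    (B := fun u => K / 2 * ‖s‖ ^ 2 * u ^ 2) (B' := fun u => K * ‖s‖ ^ 2 * u)
    (fun u _ => (hder u).continuousAt.continuousWithinAt)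
    (fun u _ => (hder u).hasDerivWithinAt) (by simp) ?_ ?_ ht
  · intro u
    have := ((hasDerivAt_id u).pow 2).const_mul (K / 2 * ‖s‖ ^ 2)
    exact this.congr_deriv (by simp; ring)
  · intro u hu
    have h1 := hK (x + u • s) x
    have h2 : ‖x + u • s - x‖ = u * ‖s‖ := by
      rw [add_sub_cancel_left, norm_smul, Real.norm_of_nonneg hu.1]
    rw [h2] at h1
    calc ‖hess f (x + u • s) s - hess f x s‖ = ‖(hess f (x + u • s) - hess f x) s‖ := by simp
      _ ≤ ‖hess f (x + u • s) - hess f x‖ * ‖s‖ := ContinuousLinearMap.le_opNorm _ _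
      _ ≤ K * (u * ‖s‖) * ‖s‖ := by gcongr
      _ = K * ‖s‖ ^ 2 * u := by ring

lemma abs_taylor_two_le {f : E → ℝ} (hf : ContDiff ℝ 2 f) {K : ℝ}
    (hK : ∀ x y, ‖hess f x - hess f y‖ ≤ K * ‖x - y‖) (x s : E) :
    |f (x + s) - f x - ⟪gradient f x, s⟫ - 1 / 2 * ⟪hess f x s, s⟫| ≤ K / 6 * ‖s‖ ^ 3 := by
  have hd : Differentiable ℝ f := hf.differentiable (by norm_num)
  have hline : ∀ u : ℝ, HasDerivAt (fun u : ℝ => x + u • s) s u := fun u => by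
    simpa using ((hasDerivAt_id u).smul_const s).const_add x
  have hder : ∀ u : ℝ, HasDerivAt
      (fun u : ℝ => f (x + u • s) - f x - u * ⟪gradient f x, s⟫ - u ^ 2 / 2 * ⟪hess f x s, s⟫)
      (⟪gradient f (x + u • s) - gradient f x - u • hess f x s, s⟫) u := fun u => by
    have h1 : HasDerivAt (fun u : ℝ => f (x + u • s)) (⟪gradient f (x + u • s), s⟫) u := by
      have := ((hd (x + u • s)).hasGradientAt.hasFDerivAt).comp_hasDerivAt u (hline u)
      exact this.congr_deriv (by simp)
    have h2 := ((h1.sub_const (f x)).sub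
      ((hasDerivAt_id u).mul_const ⟪gradient f x, s⟫)).sub
      ((((hasDerivAt_id u).pow 2).div_const 2).mul_const ⟪hess f x s, s⟫)
    exact h2.congr_deriv (by simp [inner_sub_left, inner_smul_left])
  have key := image_norm_le_of_norm_deriv_right_le_deriv_boundary
    (a := 0) (b := 1)
    (f := fun u : ℝ =>
      f (x + u • s) - f x - u * ⟪gradient f x, s⟫ - u ^ 2 / 2 * ⟪hess f x s, s⟫)
    (f' := fun u => ⟪gradient f (x + u • s) - gradient f x - u • hess f x s, s⟫)
    (B := fun u => K / 6 * ‖s‖ ^ 3 * u ^ 3) (B' := fun u => K / 2 * ‖s‖ ^ 3 * u ^ 2)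
    (fun u _ => (hder u).continuousAt.continuousWithinAt)
    (fun u _ => (hder u).hasDerivWithinAt) (by simp)
    (fun u => by
      have := ((hasDerivAt_id u).pow 3).const_mul (K / 6 * ‖s‖ ^ 3)
      exact this.congr_deriv (by simp; ring))
    (fun u hu => by
      have h1 := norm_gradient_sub_le hf hK x s ⟨hu.1, hu.2.le⟩
      calc _ ≤ ‖gradient f (x + u • s) - gradient f x - u • hess f x s‖ * ‖s‖ :=
            norm_inner_le_norm _ _
        _ ≤ (K / 2 * ‖s‖ ^ 2 * u ^ 2) * ‖s‖ := by gcongr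
        _ = K / 2 * ‖s‖ ^ 3 * u ^ 2 := by ring)
    (Set.right_mem_Icc.2 zero_le_one)
  simpa using key

end Taylor

/-! ### Averages over the local functions -/

section Averages

variable {m : ℕ}

lemma abs_avg_le {a b : Fin m → ℝ} (h : ∀ i, |a i| ≤ b i) :
    |(m : ℝ)⁻¹ * ∑ i, a i| ≤ (m : ℝ)⁻¹ * ∑ i, b i := by
  rw [abs_mul, abs_of_nonneg (by positivity : (0 : ℝ) ≤ (m : ℝ)⁻¹)]
  gcongr
  exact (Finset.abs_sum_le_sum_abs _ _).trans (Finset.sum_le_sum fun i _ => h i)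

lemma norm_avg_sub_le {V : Type*} [NormedAddCommGroup V] [NormedSpace ℝ V] {u v : Fin m → V}
    {K : Fin m → ℝ} {c : ℝ} (h : ∀ i, ‖u i - v i‖ ≤ K i * c) :
    ‖(m : ℝ)⁻¹ • ∑ i, u i - (m : ℝ)⁻¹ • ∑ i, v i‖ ≤ ((m : ℝ)⁻¹ * ∑ i, K i) * c := by
  rw [← smul_sub, ← Finset.sum_sub_distrib, norm_smul,
    Real.norm_of_nonneg (by positivity : (0 : ℝ) ≤ (m : ℝ)⁻¹), mul_assoc, Finset.sum_mul]
  gcongr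
  exact (norm_sum_le _ _).trans (Finset.sum_le_sum fun i _ => h i)

end Averages

/-- The quadratic model with inexact gradient `g` and Hessian `H`, formed from derivatives sampled
at the points `z j` near `z i`, approximates the average `F` around `z i`. -/
lemma abs_inexact_model_le
    {E : Type*} [NormedAddCommGroup E] [InnerProductSpace ℝ E] [FiniteDimensional ℝ E]
    {m : ℕ} (f : Fin m → E → ℝ) (hC2 : ∀ i, ContDiff ℝ 2 (f i)) (L1 L2 : Fin m → ℝ)
    (hL1 : ∀ i (x y : E), ‖gradient (f i) x - gradient (f i) y‖ ≤ L1 i * ‖x - y‖)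
    (hL2 : ∀ i (x y : E), ‖hess (f i) x - hess (f i) y‖ ≤ L2 i * ‖x - y‖)
    (hL1n : ∀ i, 0 ≤ L1 i) (hL2n : ∀ i, 0 ≤ L2 i)
    (z : Fin m → E) (c : E) {Δx Δg ΔH : ℝ} (hz : ∀ i, ‖z i - c‖ ≤ Δx) (i : Fin m)
    (g : E) (hg : ‖g - (m : ℝ)⁻¹ • ∑ j, gradient (f j) (z j)‖ ≤ Δg)
    (H : E →L[ℝ] E) (hH : ‖H - (m : ℝ)⁻¹ • ∑ j, hess (f j) (z j)‖ ≤ ΔH) (s : E) :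
    |(m : ℝ)⁻¹ * ∑ j, f j (z i + s) - (m : ℝ)⁻¹ * ∑ j, f j (z i) - ⟪g, s⟫ - 1 / 2 * ⟪H s, s⟫|
      ≤ (Δg + 2 * ((m : ℝ)⁻¹ * ∑ j, L1 j) * Δx) * ‖s‖
        + (ΔH + 2 * ((m : ℝ)⁻¹ * ∑ j, L2 j) * Δx) / 2 * ‖s‖ ^ 2
        + ((m : ℝ)⁻¹ * ∑ j, L2 j) / 6 * ‖s‖ ^ 3 := by
  have hzz : ∀ j, ‖z j - z i‖ ≤ 2 * Δx := fun j => by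
    have h := norm_sub_le (z j - c) (z i - c)
    rw [sub_sub_sub_cancel_right] at h
    linarith [hz j, hz i]
  set G : E := (m : ℝ)⁻¹ • ∑ j, gradient (f j) (z i) with hG
  set Q : E →L[ℝ] E := (m : ℝ)⁻¹ • ∑ j, hess (f j) (z i) with hQ
  have hgG : ‖g - G‖ ≤ Δg + 2 * ((m : ℝ)⁻¹ * ∑ j, L1 j) * Δx := by
    have h1 := norm_avg_sub_le (m := m) (u := fun j => gradient (f j) (z j))
      (v := fun j => gradient (f j) (z i)) (K := L1) (c := 2 * Δx)
      (fun j => (hL1 j _ _).trans (mul_le_mul_of_nonneg_left (hzz j) (hL1n j)))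
    have h2 := norm_sub_le_norm_sub_add_norm_sub g ((m : ℝ)⁻¹ • ∑ j, gradient (f j) (z j)) G
    linarith
  have hHQ : ‖H - Q‖ ≤ ΔH + 2 * ((m : ℝ)⁻¹ * ∑ j, L2 j) * Δx := by
    have h1 := norm_avg_sub_le (m := m) (u := fun j => hess (f j) (z j))
      (v := fun j => hess (f j) (z i)) (K := L2) (c := 2 * Δx)
      (fun j => (hL2 j _ _).trans (mul_le_mul_of_nonneg_left (hzz j) (hL2n j)))
    have h2 := norm_sub_le_norm_sub_add_norm_sub H ((m : ℝ)⁻¹ • ∑ j, hess (f j) (z j)) Q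
    linarith
  have hT := abs_avg_le (m := m) (fun j => abs_taylor_two_le (hC2 j) (hL2 j) (z i) s)
  have e1 : (m : ℝ)⁻¹ * ∑ j, (f j (z i + s) - f j (z i) - ⟪gradient (f j) (z i), s⟫
        - 1 / 2 * ⟪hess (f j) (z i) s, s⟫)
      = (m : ℝ)⁻¹ * ∑ j, f j (z i + s) - (m : ℝ)⁻¹ * ∑ j, f j (z i) - ⟪G, s⟫
        - 1 / 2 * ⟪Q s, s⟫ := by
    simp only [hG, hQ, Finset.sum_sub_distrib, inner_smul_left, sum_inner, mul_sub,
      smul_apply, _root_.sum_apply, ← Finset.mul_sum]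
    simp
    ring
  have e2 : (m : ℝ)⁻¹ * ∑ j, L2 j / 6 * ‖s‖ ^ 3 = ((m : ℝ)⁻¹ * ∑ j, L2 j) / 6 * ‖s‖ ^ 3 := by
    rw [← Finset.sum_mul, ← Finset.sum_div]; ring
  rw [e1, e2] at hT
  have h1 : |⟪g - G, s⟫| ≤ (Δg + 2 * ((m : ℝ)⁻¹ * ∑ j, L1 j) * Δx) * ‖s‖ :=
    (abs_real_inner_le_norm _ _).trans (by gcongr)
  have h2 : |⟪(H - Q) s, s⟫| ≤ (ΔH + 2 * ((m : ℝ)⁻¹ * ∑ j, L2 j) * Δx) * ‖s‖ ^ 2 := by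
    calc |⟪(H - Q) s, s⟫| ≤ ‖(H - Q) s‖ * ‖s‖ := abs_real_inner_le_norm _ _
      _ ≤ (‖H - Q‖ * ‖s‖) * ‖s‖ := by gcongr; exact ContinuousLinearMap.le_opNorm _ _
      _ = ‖H - Q‖ * ‖s‖ ^ 2 := by ring
      _ ≤ _ := by gcongr
  rw [inner_sub_left] at h1
  rw [sub_apply, inner_sub_left] at h2
  rw [abs_le] at hT h1 h2 ⊢
  constructor <;> linarith [hT.1, hT.2, h1.1, h1.2, h2.1, h2.2]

/-- The average of `μ i`-strongly convex functions is strongly convex with the averaged modulus. -/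
lemma avg_strong_convex
    {E : Type*} [NormedAddCommGroup E] [InnerProductSpace ℝ E] {m : ℕ} (f : Fin m → E → ℝ)
    (μ : Fin m → ℝ) (hsc : ∀ i, ConvexOn ℝ Set.univ (fun x => f i x - μ i / 2 * ‖x‖ ^ 2))
    (x y : E) {a : ℝ} (ha0 : 0 ≤ a) (ha1 : a ≤ 1) :
    (m : ℝ)⁻¹ * ∑ i, f i (x + a • (y - x)) ≤
      (1 - a) * ((m : ℝ)⁻¹ * ∑ i, f i x) + a * ((m : ℝ)⁻¹ * ∑ i, f i y)
        - a * (1 - a) * (((m : ℝ)⁻¹ * ∑ i, μ i) / 2) * ‖x - y‖ ^ 2 := by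
  have h : ∀ i, f i (x + a • (y - x)) ≤
      (1 - a) * f i x + a * f i y - a * (1 - a) / 2 * ‖x - y‖ ^ 2 * μ i := fun i => by
    have h1 := (strongConvexOn_iff_convex.2 (hsc i)).2 (Set.mem_univ x) (Set.mem_univ y)
      (sub_nonneg.2 ha1) ha0 (by ring)
    have e : (1 - a) • x + a • y = x + a • (y - x) := by module
    rw [e] at h1
    simp only [smul_eq_mul] at h1
    linarith
  have h2 := mul_le_mul_of_nonneg_left (Finset.sum_le_sum fun i (_ : i ∈ Finset.univ) => h i)
    (by positivity : (0 : ℝ) ≤ (m : ℝ)⁻¹)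
  rw [Finset.sum_sub_distrib, Finset.sum_add_distrib, ← Finset.mul_sum, ← Finset.mul_sum,
    ← Finset.mul_sum] at h2
  linarith

/-! ### Scalar estimates -/

/-- The scalar inequality behind the one-step estimate: with the prescribed tolerances, the
overestimation error at a point at distance at most `α r + Δx` is absorbed by the strong convexity
gain, up to `α ε / 2`. -/
lemma error_budget {ε D L L1 L2 μ α Δx Δg ΔH r s : ℝ}
    (hε : 0 < ε) (hD : 0 < D) (hLL : 0 < L + L2) (hL1 : 0 ≤ L1) (hL2 : 0 ≤ L2) (hμ : 0 < μ)
    (hα0 : 0 < α) (hα : α = min (1 / 2) (Real.sqrt (3 * μ / (16 * (L + L2) * D))))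
    (hΔx0 : 0 ≤ Δx)
    (hΔx : Δx = min
        (min (α * ε / (24 * L1 * D)) ((α * ε / (4 * (L + L2))) ^ ((1 : ℝ) / 3)))
        (min (2 * D * Real.sqrt (α * ε * L1 /
              (3 * μ * D ^ 2 * L1 + 4 * α * ε * (2 * L1 + D * L2))))
          (μ / (64 * (L1 / D + L2)))))
    (hΔg0 : 0 ≤ Δg) (hΔg : Δg = min (α * ε / (12 * D)) (μ * D / 32)) (hΔH : ΔH = μ / 16)
    (hr0 : 0 ≤ r) (hrD : r ≤ D) (hs0 : 0 ≤ s) (hs : s ≤ α * r + Δx) :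
    (Δg + 2 * L1 * Δx) * D
      + ((Δg + 2 * L1 * Δx) / D + (ΔH + 2 * L2 * Δx)) * s ^ 2 + (L + L2) / 6 * s ^ 3
      ≤ α * ε / 2 + α * (1 - α) * (μ / 2) * r ^ 2 := by
  have hα2 : α ≤ 1 / 2 := hα ▸ min_le_left _ _
  have hαsq : α ^ 2 * (16 * (L + L2) * D) ≤ 3 * μ := by
    have h1 : α ≤ Real.sqrt (3 * μ / (16 * (L + L2) * D)) := hα.le.trans (min_le_right _ _)
    have h2 := (Real.le_sqrt hα0.le (by positivity)).1 h1
    exact (le_div_iff₀ (by positivity)).1 h2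
  have hg1 : Δg * D ≤ α * ε / 12 := by
    have h1 : Δg ≤ α * ε / (12 * D) := hΔg.le.trans (min_le_left _ _)
    rw [le_div_iff₀ (by positivity)] at h1
    linarith
  have hg2 : Δg / D ≤ μ / 32 := by
    have h1 : Δg ≤ μ * D / 32 := hΔg.le.trans (min_le_right _ _)
    rw [div_le_iff₀ hD]; linarith
  -- When `Δx > 0` the first term of the minimum is positive, which excludes `L1 = 0`.
  have hpos : 0 < Δx → 0 < L1 := fun h => by
    rcases hL1.eq_or_lt with h0 | h0
    · exfalso
      have h1 : Δx ≤ α * ε / (24 * L1 * D) :=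
        hΔx.le.trans ((min_le_left _ _).trans (min_le_left _ _))
      rw [← h0] at h1
      simp at h1
      linarith
    · exact h0
  have hx1 : 2 * L1 * Δx * D ≤ α * ε / 12 := by
    rcases hΔx0.eq_or_lt with h | h
    · rw [← h]; simp; positivity
    have := hpos h
    have h1 : Δx ≤ α * ε / (24 * L1 * D) :=
      hΔx.le.trans ((min_le_left _ _).trans (min_le_left _ _))
    rw [le_div_iff₀ (by positivity)] at h1
    linarith
  have hx2 : (L + L2) * Δx ^ 3 ≤ α * ε / 4 := by
    have h1 : Δx ≤ (α * ε / (4 * (L + L2))) ^ ((1 : ℝ) / 3) :=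
      hΔx.le.trans ((min_le_left _ _).trans (min_le_right _ _))
    have h2 : Δx ^ 3 ≤ ((α * ε / (4 * (L + L2))) ^ ((1 : ℝ) / 3)) ^ 3 := by gcongr
    rw [← Real.rpow_natCast (_ ^ _), ← Real.rpow_mul (by positivity)] at h2
    norm_num at h2
    rw [le_div_iff₀ (by positivity)] at h2
    linarith
  have hx4 : 2 * Δx * (L1 / D + L2) ≤ μ / 32 := by
    rcases hΔx0.eq_or_lt with h | h
    · rw [← h]; simp; positivity
    have := hpos h
    have h1 : Δx ≤ μ / (64 * (L1 / D + L2)) :=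
      hΔx.le.trans ((min_le_right _ _).trans (min_le_right _ _))
    rw [le_div_iff₀ (by positivity)] at h1
    linarith
  set c := (Δg + 2 * L1 * Δx) / D + (ΔH + 2 * L2 * Δx) with hc
  have hc' : c = Δg / D + ΔH + 2 * Δx * (L1 / D + L2) := by rw [hc]; field_simp; ring
  have hc0 : 0 ≤ c := by rw [hc, hΔH]; positivity
  have hc8 : c ≤ μ / 8 := by rw [hc', hΔH]; linarith
  -- Here `c` is bounded through `ε` instead of `μ`, matching the denominator under the root.
  have hcx : 2 * c * Δx ^ 2 ≤ α * ε / 6 := by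
    rcases hΔx0.eq_or_lt with h | h
    · rw [← h]; simp; positivity
    have hL1p := hpos h
    have h3 : Δx ≤ 2 * D * Real.sqrt (α * ε * L1 /
              (3 * μ * D ^ 2 * L1 + 4 * α * ε * (2 * L1 + D * L2))) :=
      hΔx.le.trans ((min_le_right _ _).trans (min_le_left _ _))
    set B := 3 * μ * D ^ 2 * L1 + 4 * α * ε * (2 * L1 + D * L2) with hB
    have hBpos : 0 < B := by positivity
    have h4 : Δx ^ 2 ≤ 4 * D ^ 2 * (α * ε * L1 / B) := by
      calc Δx ^ 2 ≤ (2 * D * Real.sqrt (α * ε * L1 / B)) ^ 2 := by gcongr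
        _ = _ := by rw [mul_pow, Real.sq_sqrt (by positivity)]; ring
    have h5 : c ≤ B / (48 * D ^ 2 * L1) := by
      rw [le_div_iff₀ (by positivity)]
      have e : c * (48 * D ^ 2 * L1) = 48 * L1 * (Δg * D) + 48 * D ^ 2 * L1 * ΔH
          + 48 * (L1 + D * L2) * (2 * L1 * Δx * D) := by
        rw [hc]; field_simp; ring
      have e1 := mul_le_mul_of_nonneg_left hg1 (by positivity : 0 ≤ 48 * L1)
      have e2 := mul_le_mul_of_nonneg_left hx1 (by positivity : 0 ≤ 48 * (L1 + D * L2))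
      rw [e, hΔH, hB]
      linarith
    calc 2 * c * Δx ^ 2 ≤ 2 * (B / (48 * D ^ 2 * L1)) * (4 * D ^ 2 * (α * ε * L1 / B)) := by gcongr
      _ = α * ε / 6 := by field_simp; norm_num
  have hs2 : s ^ 2 ≤ 2 * α ^ 2 * r ^ 2 + 2 * Δx ^ 2 := by
    calc s ^ 2 ≤ (α * r + Δx) ^ 2 := by gcongr
      _ ≤ _ := by nlinarith [sq_nonneg (α * r - Δx)]
  have hs3 : s ^ 3 ≤ 4 * (α * r) ^ 3 + 4 * Δx ^ 3 := by
    calc s ^ 3 ≤ (α * r + Δx) ^ 3 := by gcongr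
      _ ≤ _ := by
        have : 0 ≤ α * r := by positivity
        nlinarith [mul_nonneg (add_nonneg this hΔx0) (sq_nonneg (α * r - Δx))]
  have t1 : c * s ^ 2 ≤ α * μ / 8 * r ^ 2 + α * ε / 6 := by
    have h1 := mul_le_mul_of_nonneg_left hs2 hc0
    have h2 : c * (2 * α ^ 2 * r ^ 2) ≤ μ / 8 * (2 * (α * (1 / 2)) * r ^ 2) := by
      rw [pow_two α]; gcongr
    linarith
  have t2 : (L + L2) / 6 * s ^ 3 ≤ α * μ / 8 * r ^ 2 + α * ε / 6 := by
    have h1 := mul_le_mul_of_nonneg_left hs3 (by positivity : 0 ≤ (L + L2) / 6)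
    have h2 : (L + L2) * (α * r) ^ 3 ≤ 3 * μ / 16 * (α * r ^ 2) := by
      calc (L + L2) * (α * r) ^ 3 = ((L + L2) * α ^ 2 * r) * (α * r ^ 2) := by ring
        _ ≤ ((L + L2) * α ^ 2 * D) * (α * r ^ 2) := by gcongr
        _ ≤ _ := by
          refine mul_le_mul_of_nonneg_right ?_ (by positivity)
          linarith
    linarith
  have t3 : α * μ / 4 * r ^ 2 ≤ α * (1 - α) * (μ / 2) * r ^ 2 := by
    have : α * (1 / 2) * (μ / 2) * r ^ 2 ≤ α * (1 - α) * (μ / 2) * r ^ 2 := by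
      gcongr; linarith
    linarith
  linarith

/-- Iterating a contraction with additive error, with a number of steps chosen logarithmically. -/
lemma gap_le_of_contraction {a : ℕ → ℝ} {α ε : ℝ} (hα0 : 0 < α) (hα1 : α ≤ 1 / 2) (hε : 0 < ε)
    {N : ℕ} (ha0 : 0 < a 0) (hN : 1 / α * Real.log (2 * a 0 / ε) ≤ N + 1)
    (hstep : ∀ k ≤ N, a (k + 1) ≤ (1 - α) * a k + α * ε / 2) : a (N + 1) ≤ ε := by
  have hind : ∀ k ≤ N + 1, a k ≤ (1 - α) ^ k * a 0 + ε / 2 := by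
    intro k
    induction k with
    | zero => intro _; simp; linarith
    | succ k ih =>
      intro hk
      have h1 := mul_le_mul_of_nonneg_left (ih (by omega)) (by linarith : 0 ≤ 1 - α)
      have h2 := hstep k (by omega)
      rw [pow_succ]
      linarith
  have h1 := hind (N + 1) le_rfl
  have h2 : (1 - α) ^ (N + 1) ≤ Real.exp (-(α * (N + 1))) := by
    have h := Real.add_one_le_exp (-α)
    calc (1 - α) ^ (N + 1) ≤ Real.exp (-α) ^ (N + 1) :=
          pow_le_pow_left₀ (by linarith) (by linarith) _
      _ = _ := by rw [← Real.exp_nat_mul]; push_cast; ring_nf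
  have h3 : Real.log (2 * a 0 / ε) ≤ α * (N + 1) := by
    rw [one_div, inv_mul_le_iff₀ hα0] at hN; exact hN
  have h4 : Real.exp (-(α * (N + 1))) ≤ ε / (2 * a 0) := by
    calc Real.exp (-(α * (N + 1))) ≤ Real.exp (-Real.log (2 * a 0 / ε)) := by
          gcongr
      _ = _ := by rw [Real.exp_neg, Real.exp_log (by positivity), inv_div]
  have h5 : (1 - α) ^ (N + 1) * a 0 ≤ ε / (2 * a 0) * a 0 := by
    gcongr; exact h2.trans h4
  have h6 : ε / (2 * a 0) * a 0 = ε / 2 := by field_simp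
  linarith

/-! ### The ε-solution guarantee -/

/-- **ε-solution guarantee for strongly convex Decentralized Cubic Newton** (Theorem 2). -/
theorem decentralized_cubic_newton_strongly_convex_eps_solution
    {E : Type*} [NormedAddCommGroup E] [InnerProductSpace ℝ E] [FiniteDimensional ℝ E]
    {m : ℕ} (hm : 1 ≤ m)
    (f : Fin m → E → ℝ)
    (hC2 : ∀ i, ContDiff ℝ 2 (f i))
    (L1 L2 : Fin m → ℝ)
    (hL1 : ∀ i (x y : E), ‖gradient (f i) x - gradient (f i) y‖ ≤ L1 i * ‖x - y‖)
    (hL2 : ∀ i (x y : E), ‖hess (f i) x - hess (f i) y‖ ≤ L2 i * ‖x - y‖)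
    -- each f_i is μ_i-strongly convex with μ_i > 0
    (μ : Fin m → ℝ) (hμpos : ∀ i, 0 < μ i)
    (hsc : ∀ i, ConvexOn ℝ Set.univ (fun x => f i x - μ i / 2 * ‖x‖ ^ 2))
    (F : E → ℝ) (hF : F = fun x => (m : ℝ)⁻¹ * ∑ i, f i x)
    (L1bar L2bar μbar : ℝ)
    (hL1bar : L1bar = (m : ℝ)⁻¹ * ∑ i, L1 i)
    (hL2bar : L2bar = (m : ℝ)⁻¹ * ∑ i, L2 i)
    (hμbar : μbar = (m : ℝ)⁻¹ * ∑ i, μ i)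
    -- the global minimizer of F
    (xstar : E) (hstar : ∀ y, F xstar ≤ F y)
    -- accuracy, radius and parameters
    (ε D L : ℝ) (hε : 0 < ε) (hD : 0 < D) (hL : L2bar ≤ L)
    (γ : ℝ) (hγ : γ = 1 / D)
    (α : ℝ) (hα : α = min (1 / 2) (Real.sqrt (3 * μbar / (16 * (L + L2bar) * D))))
    -- the stated uniform bounds on the consensus errors
    (Δxb Δgb ΔHb : ℝ)
    (hΔxb : Δxb = min
        (min (α * ε / (24 * L1bar * D)) ((α * ε / (4 * (L + L2bar))) ^ ((1 : ℝ) / 3)))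
        (min (2 * D * Real.sqrt (α * ε * L1bar /
              (3 * μbar * D ^ 2 * L1bar + 4 * α * ε * (2 * L1bar + D * L2bar))))
          (μbar / (64 * (L1bar / D + L2bar)))))
    (hΔgb : Δgb = min (α * ε / (12 * D)) (μbar * D / 32))
    (hΔHb : ΔHb = μbar / 16)
    (δ1 δ2 : ℝ)
    (hδ1 : δ1 = Δgb + 2 * L1bar * Δxb)
    (hδ2 : δ2 = ΔHb + 2 * L2bar * Δxb)
    -- the trajectory
    (X : ℕ → Fin m → E)
    (xbar : ℕ → E) (hxbar : ∀ k, xbar k = (m : ℝ)⁻¹ • ∑ i, X k i)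
    -- number of iterations
    (N : ℕ)
    (hN : (N : ℤ) = ⌈(1 / α) * Real.log (2 * (F (xbar 0) - F xstar) / ε)⌉ - 1)
    (xh : ℕ → Fin m → E)
    (hxh : ∀ k ≤ N, ∀ i, ‖xh k i - xbar k‖ ≤ Δxb)
    (g : ℕ → Fin m → E)
    (hg : ∀ k ≤ N, ∀ i, ‖g k i - (m : ℝ)⁻¹ • ∑ j, gradient (f j) (xh k j)‖ ≤ Δgb)
    (H : ℕ → Fin m → E →L[ℝ] E)
    (hHsym : ∀ k ≤ N, ∀ i, ∀ v w : E, ⟪H k i v, w⟫ = ⟪v, H k i w⟫)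
    (hH : ∀ k ≤ N, ∀ i, ‖H k i - (m : ℝ)⁻¹ • ∑ j, hess (f j) (xh k j)‖ ≤ ΔHb)
    -- each x_i^{k+1} is a global minimizer of the local cubic model ω̂_i^k
    (ω : ℕ → Fin m → E → ℝ)
    (hω : ∀ k i y, ω k i y =
      ⟪g k i, y - xh k i⟫ + (1 / 2) * ⟪H k i (y - xh k i), y - xh k i⟫ + δ1 / (2 * γ)
        + ((γ * δ1 + δ2) / 2) * ‖y - xh k i‖ ^ 2 + (L / 6) * ‖y - xh k i‖ ^ 3)
    (hstep : ∀ k ≤ N, ∀ i, ∀ y, ω k i (X (k + 1) i) ≤ ω k i y)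
    -- boundedness of the averaged trajectory
    (hDtraj : ∀ k ≤ N, ‖xbar k - xstar‖ ≤ D) :
    F (xbar (N + 1)) - F xstar ≤ ε := by
  subst hF
  beta_reduce at hstar hN ⊢
  rcases subsingleton_or_nontrivial E with hE | hE
  · rw [Subsingleton.elim (xbar (N + 1)) xstar, sub_self]; exact hε.le
  obtain ⟨v, hv⟩ := exists_ne (0 : E)
  have hvn : 0 < ‖v - 0‖ := by simpa using hv
  have hL1n : ∀ i, 0 ≤ L1 i := fun i =>
    nonneg_of_mul_nonneg_left ((norm_nonneg _).trans (hL1 i v 0)) hvn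
  have hL2n : ∀ i, 0 ≤ L2 i := fun i =>
    nonneg_of_mul_nonneg_left ((norm_nonneg _).trans (hL2 i v 0)) hvn
  have hm' : (0 : ℝ) < m := by exact_mod_cast hm
  have : Nonempty (Fin m) := ⟨⟨0, hm⟩⟩
  have hL1b : 0 ≤ L1bar := by
    rw [hL1bar]; exact mul_nonneg (by positivity) (Finset.sum_nonneg fun i _ => hL1n i)
  have hL2b : 0 ≤ L2bar := by
    rw [hL2bar]; exact mul_nonneg (by positivity) (Finset.sum_nonneg fun i _ => hL2n i)
  have hμb : 0 < μbar := by
    rw [hμbar]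
    exact mul_pos (by positivity) (Finset.sum_pos (fun i _ => hμpos i) Finset.univ_nonempty)
  have hα_nonneg : 0 ≤ α := by rw [hα]; exact le_min (by norm_num) (Real.sqrt_nonneg _)
  have hα_half : α ≤ 1 / 2 := hα ▸ min_le_left _ _
  -- As `N` is a natural number, the ceiling is at least `1`.
  have hceil : 0 < (1 / α) * Real.log (2 * ((m : ℝ)⁻¹ * ∑ i, f i (xbar 0)
      - (m : ℝ)⁻¹ * ∑ i, f i xstar) / ε) := by
    rw [← Int.ceil_pos]; omega
  have hα0 : 0 < α := by
    rcases hα_nonneg.eq_or_lt with h | h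
    · rw [← h] at hceil; simp at hceil
    · exact h
  have hLL : 0 < L + L2bar := by
    rcases (by linarith : 0 ≤ L + L2bar).eq_or_lt with h | h
    · rw [← h] at hα; simp at hα; linarith
    · exact h
  have hgap0 : 0 < (m : ℝ)⁻¹ * ∑ i, f i (xbar 0) - (m : ℝ)⁻¹ * ∑ i, f i xstar := by
    rcases (sub_nonneg.2 (hstar (xbar 0))).eq_or_lt with h | h
    · rw [← h] at hceil; simp at hceil
    · exact h
  have hΔx0 : 0 ≤ Δxb := (norm_nonneg _).trans (hxh 0 (Nat.zero_le _) ⟨0, hm⟩)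
  have hΔg0 : 0 ≤ Δgb := (norm_nonneg _).trans (hg 0 (Nat.zero_le _) ⟨0, hm⟩)
  have hδ1n : 0 ≤ δ1 := by rw [hδ1]; positivity
  have hconv : ConvexOn ℝ Set.univ (fun x => (m : ℝ)⁻¹ * ∑ i, f i x) := by
    refine ⟨convex_univ, fun x _ y _ a b ha hb hab => ?_⟩
    have h := avg_strong_convex f μ hsc x y hb (by linarith)
    have e : x + b • (y - x) = a • x + b • y := by
      rw [show a = 1 - b by linarith]; module
    rw [e, ← hμbar] at h
    have : 0 ≤ b * (1 - b) * (μbar / 2) * ‖x - y‖ ^ 2 := by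
      have : 0 ≤ 1 - b := by linarith
      positivity
    simp only [smul_eq_mul]
    obtain rfl : a = 1 - b := by linarith
    linarith
  refine gap_le_of_contraction
    (a := fun k => (m : ℝ)⁻¹ * ∑ i, f i (xbar k) - (m : ℝ)⁻¹ * ∑ i, f i xstar)
    hα0 hα_half hε hgap0 ?_ ?_
  · have h1 : (⌈(1 / α) * Real.log (2 * ((m : ℝ)⁻¹ * ∑ i, f i (xbar 0)
      - (m : ℝ)⁻¹ * ∑ i, f i xstar) / ε)⌉ : ℤ) = (N : ℤ) + 1 := by omega
    have h2 := Int.le_ceil ((1 / α) * Real.log (2 * ((m : ℝ)⁻¹ * ∑ i, f i (xbar 0)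
      - (m : ℝ)⁻¹ * ∑ i, f i xstar) / ε))
    rw [h1] at h2
    exact_mod_cast h2
  intro k hk
  -- The one-step estimate holds already at each local iterate `X (k + 1) i`.
  have hlocal : ∀ i, (m : ℝ)⁻¹ * ∑ j, f j (X (k + 1) i) ≤
      (1 - α) * ((m : ℝ)⁻¹ * ∑ j, f j (xbar k)) + α * ((m : ℝ)⁻¹ * ∑ j, f j xstar)
        + α * ε / 2 := by
    intro i
    have hmodel : ∀ w : E, |(m : ℝ)⁻¹ * ∑ j, f j w - (m : ℝ)⁻¹ * ∑ j, f j (xh k i)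
        - ⟪g k i, w - xh k i⟫ - 1 / 2 * ⟪H k i (w - xh k i), w - xh k i⟫|
        ≤ δ1 * ‖w - xh k i‖ + δ2 / 2 * ‖w - xh k i‖ ^ 2 + L2bar / 6 * ‖w - xh k i‖ ^ 3 := by
      intro w
      have h := abs_inexact_model_le f hC2 L1 L2 hL1 hL2 hL1n hL2n (xh k) (xbar k) (hxh k hk) i
        (g k i) (hg k hk i) (H k i) (hH k hk i) (w - xh k i)
      rw [add_sub_cancel, ← hL1bar, ← hL2bar, ← hδ1, ← hδ2] at h
      exact h
    -- Young's inequality with weight `γ = 1 / D`.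
    have hyoung : ∀ n : ℝ, δ1 * n ≤ δ1 / (2 * γ) + γ * δ1 / 2 * n ^ 2 := by
      intro n
      have e : δ1 / (2 * γ) + γ * δ1 / 2 * n ^ 2 - δ1 * n = δ1 / (2 * D) * (D - n) ^ 2 := by
        rw [hγ]; field_simp; ring
      have : 0 ≤ δ1 / (2 * D) * (D - n) ^ 2 := by positivity
      linarith
    set y := xbar k + α • (xstar - xbar k) with hy
    have hup := (abs_le.1 (hmodel (X (k + 1) i))).2
    have hlo := (abs_le.1 (hmodel y)).1
    have hmin := hstep k hk i y
    rw [hω, hω] at hmin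
    have hy1 := hyoung ‖X (k + 1) i - xh k i‖
    have hy2 := hyoung ‖y - xh k i‖
    have hcube : L2bar / 6 * ‖X (k + 1) i - xh k i‖ ^ 3 ≤ L / 6 * ‖X (k + 1) i - xh k i‖ ^ 3 := by
      gcongr
    have hsn : ‖y - xh k i‖ ≤ α * ‖xbar k - xstar‖ + Δxb := by
      have e : y - xh k i = α • (xstar - xbar k) - (xh k i - xbar k) := by rw [hy]; abel
      rw [e]
      refine (norm_sub_le _ _).trans ?_
      rw [norm_smul, Real.norm_of_nonneg hα0.le, norm_sub_rev xstar]
      gcongr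
      exact hxh k hk i
    have hbud := error_budget hε hD hLL hL1b hL2b hμb hα0 hα hΔx0 hΔxb hΔg0 hΔgb hΔHb
      (norm_nonneg (xbar k - xstar)) (hDtraj k hk) (norm_nonneg (y - xh k i)) hsn
    rw [← hδ1, ← hδ2] at hbud
    have hscv := avg_strong_convex f μ hsc (xbar k) xstar hα0.le (by linarith)
    rw [← hy, ← hμbar] at hscv
    have eγ : δ1 / (2 * γ) = δ1 * D / 2 := by rw [hγ]; field_simp
    have eγ2 : γ * δ1 = δ1 / D := by rw [hγ]; field_simp
    rw [eγ, eγ2] at hmin hy1 hy2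
    linarith
  have hjensen := hconv.map_sum_le (t := Finset.univ) (w := fun _ : Fin m => (m : ℝ)⁻¹)
    (p := X (k + 1)) (fun _ _ => by positivity) (by simp [hm'.ne']) (fun _ _ => Set.mem_univ _)
  rw [← Finset.smul_sum, ← hxbar] at hjensen
  simp only [smul_eq_mul] at hjensen
  have hsum : ∑ i : Fin m, (m : ℝ)⁻¹ * ((m : ℝ)⁻¹ * ∑ j, f j (X (k + 1) i)) ≤
      ∑ i : Fin m, (m : ℝ)⁻¹ * ((1 - α) * ((m : ℝ)⁻¹ * ∑ j, f j (xbar k))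
        + α * ((m : ℝ)⁻¹ * ∑ j, f j xstar) + α * ε / 2) :=
    Finset.sum_le_sum fun i _ => mul_le_mul_of_nonneg_left (hlocal i) (by positivity)
  rw [Finset.sum_const, Finset.card_univ, Fintype.card_fin, nsmul_eq_mul,
    mul_inv_cancel_left₀ hm'.ne'] at hsum
  linarith
end

section
/- Progress of the accelerated cubic step, small-step case (Lemma 6, case 1): suppose Δ₂ > 0, L̄₂ > 0, and let x⁺ be a global minimizer of ν̂_i. If Δ₁ ≥ Δ₂·‖v̂_i − x⁺‖ + (L̄₂/2)·‖v̂_i − x⁺‖², then ‖∇f(x⁺)‖ ≤ ( max{ δ₂/Δ₂, L/L̄₂ } + 2 )·Δ₁. -/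
/-!
Write `h = x⁺ - v̂ᵢ`, `r = ‖h‖`. First-order optimality of `x⁺` for the cubic model reads
`ĝᵢ + Ĥᵢ h = -(δ₂ + L r / 2) h` (`cubic_model_stationary`). Decompose

  `∇F(x⁺) = [∇F(x⁺) - ∇F(v̂ᵢ) - ∇²F(v̂ᵢ) h] + [∇F(v̂ᵢ) - ĝᵢ] + [∇²F(v̂ᵢ) - Ĥᵢ] h + [ĝᵢ + Ĥᵢ h]`.

The first bracket is at most `L̄₂ r² / 2` by the Taylor estimate for a gradient with Lipschitz
derivative (`taylor_gradient_bound`). The next two are at most `Δ₁` and `Δ₂ r`, because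
`‖v̂ᵢ - v̂ⱼ‖ ≤ 2 Δ̂ᵥ` (`average_consensus_bound`). Hence
`‖∇F(x⁺)‖ ≤ Δ₁ + (Δ₂ r + L̄₂ r² / 2) + (δ₂/Δ₂) (Δ₂ r) + (L/L̄₂) (L̄₂ r² / 2)`,
and the small-step condition bounds the right-hand side by the claim.
-/

open scoped RealInnerProductSpace
open Finset

/-- The derivative at a minimizer of the cubic model vanishes. -/
lemma cubic_model_stationary {E : Type*} [NormedAddCommGroup E] [InnerProductSpace ℝ E]
    (g v : E) (H : E →L[ℝ] E) (hsym : ∀ a b : E, ⟪H a, b⟫ = ⟪a, H b⟫) (δ L : ℝ) (x : E)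
    (hmin : ∀ y, ⟪g, x - v⟫ + (1 / 2) * ⟪H (x - v), x - v⟫
        + (δ / 2) * ‖x - v‖ ^ 2 + (L / 6) * ‖x - v‖ ^ 3 ≤
      ⟪g, y - v⟫ + (1 / 2) * ⟪H (y - v), y - v⟫
        + (δ / 2) * ‖y - v‖ ^ 2 + (L / 6) * ‖y - v‖ ^ 3) :
    g + H (x - v) = -((δ + L / 2 * ‖x - v‖) • (x - v)) := by
  have hs : HasFDerivAt (fun y : E => y - v) (ContinuousLinearMap.id ℝ E) x :=
    (hasFDerivAt_id x).sub_const v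
  have h1 := (hasFDerivAt_const g x).inner ℝ hs
  have h2 := ((H.hasFDerivAt.comp x hs).inner ℝ hs).const_mul (1 / 2 : ℝ)
  have h3 := (hs.norm_sq).const_mul (δ / 2)
  have h4 := (((hasFDerivAt_norm_rpow (x - v) (p := 3) (by norm_num)).comp x hs)).const_mul (L / 6)
  have hd := ((h1.add h2).add h3).add h4
  have hcube : ∀ z : E, ‖z‖ ^ (3 : ℝ) = ‖z‖ ^ 3 := fun z => by
    exact_mod_cast Real.rpow_natCast ‖z‖ 3
  have hz := IsLocalMin.hasFDerivAt_eq_zero (Filter.Eventually.of_forall fun y => by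
    simpa only [Pi.add_apply, Function.comp_apply, hcube] using hmin y) hd
  refine ext_inner_right ℝ fun w => ?_
  have hw := congrArg (fun T : E →L[ℝ] ℝ => T w) hz
  have hp : ‖x - v‖ ^ ((3 : ℝ) - 2) = ‖x - v‖ := by norm_num
  simp [hp, fderivInnerCLM_apply, -map_sub] at hw
  have hc : ⟪H w, x - v⟫ = ⟪H (x - v), w⟫ := by rw [hsym, real_inner_comm]
  rw [inner_add_left, inner_neg_left, real_inner_smul_left]
  rw [hc] at hw
  linarith

/-- Second-order Taylor estimate for a gradient whose derivative is Lipschitz. -/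
lemma taylor_gradient_bound {E : Type*} [NormedAddCommGroup E] [InnerProductSpace ℝ E]
    [FiniteDimensional ℝ E] (G : E → E) (hG : Differentiable ℝ G) (K : ℝ)
    (hK : ∀ x y : E, ‖fderiv ℝ G x - fderiv ℝ G y‖ ≤ K * ‖x - y‖) (v x : E) :
    ‖G x - G v - fderiv ℝ G v (x - v)‖ ≤ K / 2 * ‖x - v‖ ^ 2 := by
  have hφ : ∀ t : ℝ, HasDerivAt
      (fun t : ℝ => G (v + t • (x - v)) - G v - t • fderiv ℝ G v (x - v))
      (fderiv ℝ G (v + t • (x - v)) (x - v) - fderiv ℝ G v (x - v)) t := by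
    intro t
    have hl : HasDerivAt (fun t : ℝ => v + t • (x - v)) (x - v) t := by
      simpa using ((hasDerivAt_id t).smul_const (x - v)).const_add v
    have := ((hG (v + t • (x - v))).hasFDerivAt.comp_hasDerivAt t hl).sub_const (G v)
    have h := this.sub ((hasDerivAt_id t).smul_const (fderiv ℝ G v (x - v)))
    rw [one_smul] at h
    exact h
  have hB : ∀ t : ℝ, HasDerivAt (fun t : ℝ => K / 2 * ‖x - v‖ ^ 2 * t ^ 2)
      (K * ‖x - v‖ ^ 2 * t) t := by
    intro t
    refine ((hasDerivAt_pow 2 t).const_mul (K / 2 * ‖x - v‖ ^ 2)).congr_deriv ?_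
    push_cast
    ring
  have := image_norm_le_of_norm_deriv_right_le_deriv_boundary (a := 0) (b := 1)
    (fun t _ => (hφ t).continuousAt.continuousWithinAt)
    (fun t _ => (hφ t).hasDerivWithinAt) (B := fun t : ℝ => K / 2 * ‖x - v‖ ^ 2 * t ^ 2)
    (by simp) hB
    (fun t ht => by
      rw [← sub_apply]
      refine (ContinuousLinearMap.le_opNorm _ _).trans ?_
      have h := hK (v + t • (x - v)) v
      rw [add_sub_cancel_left, norm_smul, Real.norm_of_nonneg ht.1] at h
      calc _ ≤ K * (t * ‖x - v‖) * ‖x - v‖ := by gcongr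
        _ = _ := by ring)
    (Set.right_mem_Icc.2 zero_le_one)
  simpa using this

lemma average_norm_le {E : Type*} [NormedAddCommGroup E] [NormedSpace ℝ E] {m : ℕ}
    (a : Fin m → E) (b : Fin m → ℝ) (hab : ∀ j, ‖a j‖ ≤ b j) :
    ‖(m : ℝ)⁻¹ • ∑ j, a j‖ ≤ (m : ℝ)⁻¹ * ∑ j, b j := by
  rw [norm_smul, Real.norm_of_nonneg (by positivity)]
  gcongr
  exact norm_sum_le_of_le _ fun j _ => hab j

/-- Replacing the averaged data at the points `v j` by the average at the single point `v i`
costs at most `2 * Kbar * Δv`; a consensus error `Δ` adds up on top. -/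
lemma average_consensus_bound {E V : Type*} [NormedAddCommGroup E] [Nontrivial E]
    [NormedAddCommGroup V] [NormedSpace ℝ V] {m : ℕ}
    (q : Fin m → E → V) (K : Fin m → ℝ)
    (hK : ∀ j (x y : E), ‖q j x - q j y‖ ≤ K j * ‖x - y‖)
    (v : Fin m → E) (vbar : E) (Δv : ℝ) (hv : ∀ j, ‖v j - vbar‖ ≤ Δv)
    (A : V) (Δ : ℝ) (hA : ‖A - (m : ℝ)⁻¹ • ∑ j, q j (v j)‖ ≤ Δ) (i : Fin m) :
    ‖(m : ℝ)⁻¹ • ∑ j, q j (v i) - A‖ ≤ Δ + 2 * ((m : ℝ)⁻¹ * ∑ j, K j) * Δv := by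
  have hK0 : ∀ j, 0 ≤ K j := by
    intro j
    obtain ⟨x, y, hxy⟩ := exists_pair_ne E
    exact nonneg_of_mul_nonneg_left ((norm_nonneg _).trans (hK j x y))
      (norm_pos_iff.2 (sub_ne_zero.2 hxy))
  have h1 : ‖(m : ℝ)⁻¹ • ∑ j, (q j (v i) - q j (v j))‖ ≤ (m : ℝ)⁻¹ * ∑ j, K j * (2 * Δv) := by
    refine average_norm_le _ _ fun j => (hK j _ _).trans ?_
    refine mul_le_mul_of_nonneg_left ?_ (hK0 j)
    have := norm_sub_le (v i - vbar) (v j - vbar)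
    rw [sub_sub_sub_cancel_right] at this
    linarith [hv i, hv j]
  rw [← Finset.sum_mul] at h1
  have h2 : (m : ℝ)⁻¹ • ∑ j, q j (v i) - A = (m : ℝ)⁻¹ • ∑ j, (q j (v i) - q j (v j))
      - (A - (m : ℝ)⁻¹ • ∑ j, q j (v j)) := by
    rw [Finset.sum_sub_distrib, smul_sub]
    abel
  rw [h2]
  refine (norm_sub_le _ _).trans ?_
  linarith

lemma gradient_differentiable {E : Type*} [NormedAddCommGroup E] [InnerProductSpace ℝ E]
    [FiniteDimensional ℝ E] (f : E → ℝ) (hf : ContDiff ℝ 2 f) :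
    Differentiable ℝ (gradient f) := by
  have h : Differentiable ℝ (fderiv ℝ f) :=
    (hf.fderiv_right (m := 1) (by norm_num)).differentiable (by norm_num)
  exact ((InnerProductSpace.toDual ℝ E).symm.toContinuousLinearEquiv.differentiable).comp h

lemma gradient_average {E : Type*} [NormedAddCommGroup E] [InnerProductSpace ℝ E]
    [FiniteDimensional ℝ E] {m : ℕ} (f : Fin m → E → ℝ) (hf : ∀ j, ContDiff ℝ 2 (f j)) (x : E) :
    gradient (fun x => (m : ℝ)⁻¹ * ∑ j, f j x) x = (m : ℝ)⁻¹ • ∑ j, gradient (f j) x := by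
  have hd : ∀ j, DifferentiableAt ℝ (f j) x := fun j =>
    (hf j).differentiable (by norm_num) x
  have h : HasFDerivAt (fun x => (m : ℝ)⁻¹ * ∑ j, f j x)
      ((m : ℝ)⁻¹ • ∑ j, fderiv ℝ (f j) x) x :=
    (HasFDerivAt.fun_sum fun j _ => (hd j).hasFDerivAt).const_mul _
  simp only [gradient, h.fderiv, map_smul, map_sum]

/-- **Progress of the accelerated cubic step, small-step case** (Lemma 6, case 1). -/
theorem acc_step_progress_small
    {E : Type*} [NormedAddCommGroup E] [InnerProductSpace ℝ E] [FiniteDimensional ℝ E]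
    {m : ℕ} (hm : 1 ≤ m)
    (f : Fin m → E → ℝ)
    (hC2 : ∀ i, ContDiff ℝ 2 (f i))
    (L1 L2 : Fin m → ℝ)
    (hL1 : ∀ i (x y : E), ‖gradient (f i) x - gradient (f i) y‖ ≤ L1 i * ‖x - y‖)
    (hL2 : ∀ i (x y : E), ‖hess (f i) x - hess (f i) y‖ ≤ L2 i * ‖x - y‖)
    (F : E → ℝ) (hF : F = fun x => (m : ℝ)⁻¹ * ∑ i, f i x)
    (L1bar L2bar : ℝ)
    (hL1bar : L1bar = (m : ℝ)⁻¹ * ∑ i, L1 i)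
    (hL2bar : L2bar = (m : ℝ)⁻¹ * ∑ i, L2 i)
    -- consensus data at the points v̂
    (vh : Fin m → E) (vbar : E) (Δv : ℝ)
    (hvh : ∀ i, ‖vh i - vbar‖ ≤ Δv)
    (g : Fin m → E) (Δg : ℝ)
    (hg : ∀ i, ‖g i - (m : ℝ)⁻¹ • ∑ j, gradient (f j) (vh j)‖ ≤ Δg)
    (H : Fin m → E →L[ℝ] E) (ΔH : ℝ)
    (hHsym : ∀ i (v w : E), ⟪H i v, w⟫ = ⟪v, H i w⟫)
    (hH : ∀ i, ‖H i - (m : ℝ)⁻¹ • ∑ j, hess (f j) (vh j)‖ ≤ ΔH)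
    (Δ1 Δ2 : ℝ)
    (hΔ1 : Δ1 = Δg + 2 * L1bar * Δv)
    (hΔ2 : Δ2 = ΔH + 2 * L2bar * Δv)
    -- positivity assumptions and model parameters
    (hΔ2pos : 0 < Δ2) (hL2pos : 0 < L2bar)
    (δ2 L : ℝ) (hδ2 : 0 ≤ δ2) (hLpos : 0 < L)
    -- the accelerated cubic model and its global minimizer
    (ν : Fin m → E → ℝ)
    (hν : ∀ i y, ν i y =
      ⟪g i, y - vh i⟫ + (1 / 2) * ⟪H i (y - vh i), y - vh i⟫
        + (δ2 / 2) * ‖y - vh i‖ ^ 2 + (L / 6) * ‖y - vh i‖ ^ 3)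
    (i : Fin m) (xp : E)
    (hmin : ∀ y, ν i xp ≤ ν i y)
    -- the small-step case condition
    (hcase : Δ2 * ‖vh i - xp‖ + (L2bar / 2) * ‖vh i - xp‖ ^ 2 ≤ Δ1) :
    ‖gradient F xp‖ ≤ (max (δ2 / Δ2) (L / L2bar) + 2) * Δ1 := by
  have hr : 0 ≤ ‖vh i - xp‖ := norm_nonneg _
  have hΔ1nn : 0 ≤ Δ1 := le_trans (by positivity) hcase
  have hM : 0 ≤ max (δ2 / Δ2) (L / L2bar) := le_max_of_le_left (by positivity)
  -- In the zero space the Lipschitz constants may be negative, but every vector vanishes.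
  rcases subsingleton_or_nontrivial E with hE | hE
  · rw [Subsingleton.elim (gradient F xp) 0, norm_zero]
    positivity
  rw [norm_sub_rev] at hcase hr
  have hstat := cubic_model_stationary (g i) (vh i) (H i) (hHsym i) δ2 L xp
    (fun y => by simpa only [hν] using hmin y)
  have hgrad := average_consensus_bound (fun j => gradient (f j)) L1 hL1 vh vbar Δv hvh
    (g i) Δg (hg i) i
  have hhess := average_consensus_bound (fun j => hess (f j)) L2 hL2 vh vbar Δv hvh
    (H i) ΔH (hH i) i
  rw [← hL1bar, ← hΔ1] at hgrad
  rw [← hL2bar, ← hΔ2] at hhess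
  have htaylor := average_norm_le _ _ fun j => taylor_gradient_bound (gradient (f j))
    (gradient_differentiable (f j) (hC2 j)) (L2 j) (hL2 j) (vh i) xp
  rw [← Finset.sum_mul, ← Finset.sum_div, ← mul_assoc, ← mul_div_assoc, ← hL2bar] at htaylor
  have hhess' := ((((m : ℝ)⁻¹ • ∑ j, hess (f j) (vh i)) - H i).le_opNorm (xp - vh i)).trans
    (mul_le_mul_of_nonneg_right hhess hr)
  have hmodel : ‖g i + H i (xp - vh i)‖ = (δ2 + L / 2 * ‖xp - vh i‖) * ‖xp - vh i‖ := by
    rw [hstat, norm_neg, norm_smul, Real.norm_of_nonneg (by positivity)]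
  have hdecomp : gradient F xp =
      (m : ℝ)⁻¹ • ∑ j, (gradient (f j) xp - gradient (f j) (vh i)
          - fderiv ℝ (gradient (f j)) (vh i) (xp - vh i))
        + ((m : ℝ)⁻¹ • ∑ j, gradient (f j) (vh i) - g i)
        + ((m : ℝ)⁻¹ • ∑ j, hess (f j) (vh i) - H i) (xp - vh i)
        + (g i + H i (xp - vh i)) := by
    rw [hF, gradient_average f hC2]
    simp only [Finset.sum_sub_distrib, smul_sub, hess, sub_apply, smul_apply, _root_.sum_apply]
    abel
  have hnorm := norm_add₄_le (a := (m : ℝ)⁻¹ • ∑ j, (gradient (f j) xp - gradient (f j) (vh i)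
          - fderiv ℝ (gradient (f j)) (vh i) (xp - vh i)))
    (b := (m : ℝ)⁻¹ • ∑ j, gradient (f j) (vh i) - g i)
    (c := ((m : ℝ)⁻¹ • ∑ j, hess (f j) (vh i) - H i) (xp - vh i))
    (d := g i + H i (xp - vh i))
  rw [← hdecomp, hmodel] at hnorm
  set r := ‖xp - vh i‖
  set M := max (δ2 / Δ2) (L / L2bar)
  have hδM : δ2 ≤ M * Δ2 := (div_le_iff₀ hΔ2pos).1 (le_max_left _ _)
  have hLM : L ≤ M * L2bar := (div_le_iff₀ hL2pos).1 (le_max_right _ _)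
  have e1 : δ2 * r ≤ M * Δ2 * r := mul_le_mul_of_nonneg_right hδM hr
  have e2 : L * r ^ 2 ≤ M * L2bar * r ^ 2 := mul_le_mul_of_nonneg_right hLM (by positivity)
  have e3 := mul_le_mul_of_nonneg_left hcase hM
  linarith
end
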